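/- For every integer n ≥ 0, p(49n+40) ≡ 0 (mod 49). -/

import Mathlib

/-- The partition function `p(n)`: the number of partitions of `n`. -/
def p (n : ℕ) : ℕ := Fintype.card (Nat.Partition n)

/-!
Let `f = ∏ (1 - qⁿ)`, and let `a`, `b`, `c`, `d` be its parts supported on the exponents congruent
to `0`, `1`, `5`, `2` modulo `7`; the other parts vanish by Euler's pentagonal number theorem, which
also gives `d = -q² f(q⁴⁹)`. Jacobi's identity `f³ = ∑ (-1)ʲ (2j + 1) q^(j(j + 1)/2)` says that the
parts of `f³` of classes `2`, `4`, `5` vanish and determines the one of class `6`. In terms of `a`,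
`b`, `c`, `d` these are the relations of Klein's quartic. They make it possible to invert `f` class
by class: there is a form `A` in `a`, `b`, `c`, `d` with `d f A = -(κ + 7 d⁴)²`, where
`κ = a³b + b³c + c³a + d⁴` has class `1`. Reading off class `0` of `d A = -(κ + 7 d⁴)² / f` gives
`(κ + 7 d⁴)² P₅ = 7 d³ κ` for `P₅ = ∑ p(7n + 5) q^(7n + 5)`.

Modulo `7` one also has `κ² = -d f⁷`. Hence `P₅ = 7 Q` with `Q κ = d³`, so that
`Q² f⁷ = -d⁵ = q¹⁰ f²⁴⁵` and `Q = ± q⁵ f¹¹⁹ = ± q⁵ f(q⁴⁹)² f(q⁷)³` modulo `7`. By Jacobi's identity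
again, `f³` has no terms of classes `2`, `4`, `5`, `6` modulo `7`.
-/

open Finset PowerSeries

section Jacobi

variable {R : Type*} [CommRing R]

/-- The finite Euler product `(1 - q)(1 - q²)⋯(1 - qⁿ)`. -/
def eulerProd (q : R) (n : ℕ) : R := ∏ i ∈ range n, (1 - q ^ (i + 1))

@[simp]
lemma eulerProd_zero (q : R) : eulerProd q 0 = 1 := prod_range_zero _

lemma eulerProd_succ (q : R) (n : ℕ) :
    eulerProd q (n + 1) = eulerProd q n * (1 - q ^ (n + 1)) := prod_range_succ _ _

/-- `jacobiCoeff q n j` is the coefficient of `z⁻ʲ` in the finite Jacobi product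
`(1 - z) ∏_{i=1}^n (1 - z qⁱ)(1 - qⁱ / z)`. This product changes sign under `z ↦ 1 / z` up to a
factor `z`, so that the coefficient of `zʲ⁺¹` is the negative of that of `z⁻ʲ`; this is how the
coefficient of `z` enters the case `j = 0`. -/
def jacobiCoeff (q : R) : ℕ → ℕ → R
  | 0, 0 => 1
  | 0, _ + 1 => 0
  | n + 1, 0 => (1 + q ^ (n + 1) + (q ^ (n + 1)) ^ 2) * jacobiCoeff q n 0
      - q ^ (n + 1) * jacobiCoeff q n 1
  | n + 1, j + 1 => (1 + (q ^ (n + 1)) ^ 2) * jacobiCoeff q n (j + 1)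
      - q ^ (n + 1) * (jacobiCoeff q n j + jacobiCoeff q n (j + 2))

lemma jacobiCoeff_eq_zero_of_lt (q : R) {n j : ℕ} (h : n < j) : jacobiCoeff q n j = 0 := by
  induction n generalizing j with
  | zero => obtain ⟨j, rfl⟩ := Nat.exists_eq_succ_of_ne_zero h.ne'; rw [jacobiCoeff]
  | succ n ih =>
    obtain ⟨j, rfl⟩ := Nat.exists_eq_succ_of_ne_zero (Nat.ne_zero_of_lt h)
    rw [jacobiCoeff, ih (by omega), ih (by omega), ih (by omega)]
    ring

lemma add_two_choose_two (j : ℕ) : (j + 2).choose 2 = (j + 1).choose 2 + (j + 1) := by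
  rw [Nat.choose_succ_succ' (j + 1) 1, Nat.choose_one_right, add_comm]

lemma jacobiCoeff_closed_zero_step (q : R) {n : ℕ}
    (ih : ∀ d j, j + d = n → eulerProd q d * eulerProd q (d + 2 * j + 1) * jacobiCoeff q n j =
      (-1) ^ j * q ^ (j + 1).choose 2 * eulerProd q (2 * n + 1)) :
    eulerProd q (n + 1) * eulerProd q (n + 2) * jacobiCoeff q (n + 1) 0 =
      eulerProd q (2 * n + 3) := by
  have coeff_zero :
      eulerProd q n * eulerProd q (n + 1) * jacobiCoeff q n 0 = eulerProd q (2 * n + 1) := by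
    simpa using ih n 0 (zero_add n)
  have coeff_one : eulerProd q (n + 1) * eulerProd q (n + 2) * jacobiCoeff q n 1 =
      -q * (1 - q ^ (n + 1)) * (1 - q ^ n) * eulerProd q (2 * n + 1) := by
    cases n with
    | zero => simp [jacobiCoeff]
    | succ m =>
      have := ih m 1 (by omega)
      simp only [eulerProd_succ q (m + 1), eulerProd_succ q m, eulerProd_succ q (m + 2),
        Nat.choose_self, mul_one] at this ⊢
      linear_combination (1 - q ^ (m + 2)) * (1 - q ^ (m + 1)) * this
  simp only [jacobiCoeff, eulerProd_succ q (n + 1), eulerProd_succ q n,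
    eulerProd_succ q (2 * n + 1), eulerProd_succ q (2 * n + 2)] at coeff_zero coeff_one ⊢
  linear_combination (1 + q ^ (n + 1) + (q ^ (n + 1)) ^ 2) * (1 - q ^ (n + 1)) * (1 - q ^ (n + 2)) *
    coeff_zero - q ^ (n + 1) * coeff_one

lemma jacobiCoeff_closed_succ_step (q : R) (d j : ℕ)
    (ih : ∀ e i, i + e = j + d →
      eulerProd q e * eulerProd q (e + 2 * i + 1) * jacobiCoeff q (j + d) i =
        (-1) ^ i * q ^ (i + 1).choose 2 * eulerProd q (2 * (j + d) + 1)) :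
    eulerProd q d * eulerProd q (d + 2 * j + 3) * jacobiCoeff q (j + d + 1) (j + 1) =
      (-1) ^ (j + 1) * q ^ (j + 2).choose 2 * eulerProd q (2 * (j + d) + 3) := by
  have coeff_j := ih d j rfl
  have coeff_j_add_one :
      eulerProd q d * eulerProd q (d + 2 * j + 2) * jacobiCoeff q (j + d) (j + 1) =
        (1 - q ^ d) * ((-1) ^ (j + 1) * q ^ (j + 2).choose 2 * eulerProd q (2 * (j + d) + 1)) := by
    cases d with
    | zero => simp [jacobiCoeff_eq_zero_of_lt]
    | succ e =>
      have := ih e (j + 1) (by omega)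
      rw [show e + 2 * (j + 1) + 1 = e + 1 + 2 * j + 2 by ring] at this
      rw [eulerProd_succ q e]
      linear_combination (1 - q ^ (e + 1)) * this
  have coeff_j_add_two :
      q * (eulerProd q d * eulerProd q (d + 2 * j + 3) * jacobiCoeff q (j + d) (j + 2)) =
        (1 - q ^ d) * (q - q ^ d) *
          ((-1) ^ (j + 2) * q ^ (j + 3).choose 2 * eulerProd q (2 * (j + d) + 1)) := by
    rcases d with _ | _ | e
    · simp [jacobiCoeff_eq_zero_of_lt]
    · simp [jacobiCoeff_eq_zero_of_lt]
    · have := ih e (j + 2) (by omega)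
      rw [show e + 2 * (j + 2) + 1 = e + 1 + 1 + 2 * j + 3 by ring] at this
      rw [eulerProd_succ q (e + 1), eulerProd_succ q e]
      linear_combination q * (1 - q ^ (e + 1)) * (1 - q ^ (e + 2)) * this
  rw [jacobiCoeff]
  simp only [eulerProd_succ q (d + 2 * j + 2), eulerProd_succ q (d + 2 * j + 1),
    eulerProd_succ q (2 * (j + d) + 2), eulerProd_succ q (2 * (j + d) + 1),
    add_two_choose_two (j + 1), add_two_choose_two j] at coeff_j_add_one coeff_j_add_two ⊢
  linear_combination
    (1 + (q ^ (j + d + 1)) ^ 2) * (1 - q ^ (d + 2 * j + 3)) * coeff_j_add_one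
      - q ^ (j + d) * coeff_j_add_two
      - q ^ (j + d + 1) * (1 - q ^ (d + 2 * j + 2)) * (1 - q ^ (d + 2 * j + 3)) * coeff_j

lemma eulerProd_mul_eulerProd_mul_jacobiCoeff (q : R) (d j : ℕ) :
    eulerProd q d * eulerProd q (d + 2 * j + 1) * jacobiCoeff q (j + d) j =
      (-1) ^ j * q ^ (j + 1).choose 2 * eulerProd q (2 * (j + d) + 1) := by
  induction hn : j + d generalizing d j with
  | zero =>
    obtain ⟨rfl, rfl⟩ : j = 0 ∧ d = 0 := by omega
    simp [jacobiCoeff]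
  | succ n ih =>
    cases j with
    | zero =>
      obtain rfl : d = n + 1 := by omega
      simpa [mul_add] using jacobiCoeff_closed_zero_step q ih
    | succ j =>
      obtain rfl : n = j + d := by omega
      exact jacobiCoeff_closed_succ_step q d j ih

lemma sum_range_mul_jacobiCoeff_succ (q : R) (n k : ℕ) :
    ∑ j ∈ range (k + 1), (2 * j + 1) * jacobiCoeff q (n + 1) j =
      (1 - q ^ (n + 1)) ^ 2 * ∑ j ∈ range (k + 1), (2 * j + 1) * jacobiCoeff q n j +
        q ^ (n + 1) *
          ((2 * k + 3) * jacobiCoeff q n k - (2 * k + 1) * jacobiCoeff q n (k + 1)) := by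
  induction k with
  | zero => simp only [zero_add, sum_range_one, jacobiCoeff]; push_cast; ring
  | succ k ih =>
    rw [sum_range_succ, ih, sum_range_succ _ (k + 1), jacobiCoeff]
    push_cast
    ring

/-- Differentiating the finite Jacobi product at its zero `z = 1` gives, up to sign, the square of
`eulerProd q n` on the one hand and this weighted sum of coefficients on the other. -/
lemma sum_range_mul_jacobiCoeff (q : R) (n : ℕ) :
    ∑ j ∈ range (n + 1), (2 * j + 1) * jacobiCoeff q n j = eulerProd q n ^ 2 := by
  induction n with
  | zero => simp [jacobiCoeff]
  | succ n ih =>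
    rw [sum_range_mul_jacobiCoeff_succ, sum_range_succ, ih,
      jacobiCoeff_eq_zero_of_lt q (Nat.lt_succ_self n),
      jacobiCoeff_eq_zero_of_lt q (by omega : n < n + 1 + 1), eulerProd_succ]
    ring

lemma X_pow_dvd_eulerProd_sub_eulerProd {m n : ℕ} (h : n ≤ m) :
    (X : R⟦X⟧) ^ (n + 1) ∣ eulerProd X m - eulerProd X n := by
  induction m, h using Nat.le_induction with
  | base => simp
  | succ m h ih =>
    rw [eulerProd_succ, mul_one_sub, sub_right_comm]
    exact dvd_sub ih (dvd_mul_of_dvd_right (pow_dvd_pow _ (by omega)) _)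

lemma X_pow_dvd_pentagonalSeries_sub_eulerProd (n : ℕ) :
    X ^ (n + 1) ∣ pentagonalSeries R - eulerProd X n := by
  rw [X_pow_dvd_iff]
  intro i hi
  obtain ⟨s, hs⟩ := Filter.eventually_atTop.1 (coeff_prod_one_sub_X_pow_eventually_eq R i)
  obtain ⟨k, hk⟩ := s.exists_nat_subset_range
  have coeff_eq := hs (range (k + n)) (hk.trans (range_mono (by omega)))
  rw [map_sub, ← coeff_eq]
  exact X_pow_dvd_iff.1 (X_pow_dvd_eulerProd_sub_eulerProd (by omega : n ≤ k + n)) i hi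

lemma isUnit_eulerProd_X (n : ℕ) : IsUnit (eulerProd (X : R⟦X⟧) n) := by
  simp [PowerSeries.isUnit_iff_constantCoeff, eulerProd]

lemma X_pow_dvd_pentagonalSeries_mul_jacobiCoeff_sub (d j : ℕ) :
    X ^ (j + d + 1) ∣ pentagonalSeries R * jacobiCoeff X (j + d) j -
      (-1) ^ j * X ^ (j + 1).choose 2 := by
  have hu := (isUnit_eulerProd_X (R := R) d).mul (isUnit_eulerProd_X (d + 2 * j + 1))
  obtain ⟨t, ht⟩ : X ^ (d + 1) ∣ pentagonalSeries R * eulerProd X (2 * (j + d) + 1) -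
      eulerProd X d * eulerProd X (d + 2 * j + 1) := by
    have h₁ := X_pow_dvd_pentagonalSeries_sub_eulerProd (R := R) d
    have h₂ := X_pow_dvd_eulerProd_sub_eulerProd (R := R)
      (by omega : d + 2 * j + 1 ≤ 2 * (j + d) + 1)
    convert dvd_add (h₁.mul_right (eulerProd X (2 * (j + d) + 1)))
      (((pow_dvd_pow X (by omega)).trans h₂).mul_left (eulerProd X d)) using 1
    ring
  refine (pow_dvd_pow X (?_ : _ ≤ (j + 1).choose 2 + (d + 1))).trans ?_
  · cases j with
    | zero => simp
    | succ j => rw [add_two_choose_two]; omega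
  · rw [← hu.dvd_mul_left]
    refine ⟨(-1) ^ j * t, ?_⟩
    linear_combination
      pentagonalSeries R * eulerProd_mul_eulerProd_mul_jacobiCoeff (X : R⟦X⟧) d j +
        (-1) ^ j * X ^ (j + 1).choose 2 * ht

lemma X_pow_dvd_pentagonalSeries_pow_three_sub (n : ℕ) :
    X ^ (n + 1) ∣ pentagonalSeries R ^ 3 -
      ∑ j ∈ range (n + 1), (2 * (j : R⟦X⟧) + 1) * ((-1) ^ j * X ^ (j + 1).choose 2) := by
  have h₁ : X ^ (n + 1) ∣ pentagonalSeries R * eulerProd X n ^ 2 -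
      ∑ j ∈ range (n + 1), (2 * (j : R⟦X⟧) + 1) * ((-1) ^ j * X ^ (j + 1).choose 2) := by
    rw [← sum_range_mul_jacobiCoeff, mul_sum, ← sum_sub_distrib]
    refine dvd_sum fun j hj ↦ ?_
    obtain ⟨d, rfl⟩ := Nat.exists_eq_add_of_le (mem_range_succ_iff.1 hj)
    rw [mul_left_comm, ← mul_sub]
    exact (X_pow_dvd_pentagonalSeries_mul_jacobiCoeff_sub d j).mul_left _
  have h₂ := (X_pow_dvd_pentagonalSeries_sub_eulerProd (R := R) n).mul_left
    (pentagonalSeries R * (pentagonalSeries R + eulerProd X n))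
  convert dvd_add h₁ h₂ using 1
  ring

lemma coeff_pentagonalSeries_pow_three (n : ℕ) :
    coeff n (pentagonalSeries R ^ 3) =
      ∑ j ∈ range (n + 1), if n = (j + 1).choose 2 then (-1) ^ j * (2 * (j : R) + 1) else 0 := by
  have h := X_pow_dvd_iff.1 (X_pow_dvd_pentagonalSeries_pow_three_sub (R := R) n) n n.lt_succ_self
  rw [map_sub, sub_eq_zero] at h
  rw [h, map_sum]
  refine sum_congr rfl fun j _ ↦ ?_
  have term_eq : (2 * (j : R⟦X⟧) + 1) * ((-1) ^ j * X ^ (j + 1).choose 2) =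
      C ((-1) ^ j * (2 * (j : R) + 1)) * X ^ (j + 1).choose 2 := by
    simp only [map_mul, map_pow, map_neg, map_add, map_one, map_natCast, map_ofNat]
    ring
  rw [term_eq, coeff_C_mul_X_pow]

lemma strictMono_add_one_choose_two : StrictMono fun j : ℕ ↦ (j + 1).choose 2 :=
  strictMono_nat_of_lt_succ fun j ↦ by rw [add_two_choose_two]; omega

lemma coeff_add_one_choose_two_pentagonalSeries_pow_three (j : ℕ) :
    coeff ((j + 1).choose 2) (pentagonalSeries R ^ 3) = (-1) ^ j * (2 * (j : R) + 1) := by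
  rw [coeff_pentagonalSeries_pow_three, sum_eq_single j]
  · simp
  · intro i _ hij
    exact if_neg fun h ↦ hij (strictMono_add_one_choose_two.injective h.symm)
  · intro hj
    exact absurd (mem_range_succ_iff.2 (strictMono_add_one_choose_two.le_apply)) hj

lemma coeff_pentagonalSeries_pow_three_eq_zero {n : ℕ}
    (hn : n ∉ Set.range fun j : ℕ ↦ (j + 1).choose 2) : coeff n (pentagonalSeries R ^ 3) = 0 := by
  rw [coeff_pentagonalSeries_pow_three]
  exact sum_eq_zero fun j _ ↦ if_neg fun h ↦ hn ⟨j, h.symm⟩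

end Jacobi

section ResiduePart

variable {R S : Type*} [CommSemiring R] [CommSemiring S] {m : ℕ}

/-- The part of a power series supported on the exponents congruent to `r` modulo `m`. -/
noncomputable def residuePart (r : ZMod m) : R⟦X⟧ →ₗ[R] R⟦X⟧ where
  toFun φ := .mk fun n ↦ if (n : ZMod m) = r then coeff n φ else 0
  map_add' φ ψ := by ext n; simp only [coeff_mk, map_add]; split_ifs <;> simp
  map_smul' c φ := by ext n; simp

lemma coeff_residuePart (r : ZMod m) (φ : R⟦X⟧) (n : ℕ) :
    coeff n (residuePart r φ) = if (n : ZMod m) = r then coeff n φ else 0 := by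
  simp [residuePart]

lemma sum_residuePart [NeZero m] (φ : R⟦X⟧) : ∑ r : ZMod m, residuePart r φ = φ := by
  ext n
  simp [coeff_residuePart]

lemma residuePart_residuePart (r s : ZMod m) (φ : R⟦X⟧) :
    residuePart r (residuePart s φ) = if r = s then residuePart s φ else 0 := by
  ext n
  split_ifs with h <;> grind [coeff_residuePart]

lemma residuePart_residuePart_mul (r s : ZMod m) (φ ψ : R⟦X⟧) :
    residuePart r (residuePart s φ * ψ) = residuePart s φ * residuePart (r - s) ψ := by
  ext n
  rw [coeff_residuePart, coeff_mul, coeff_mul, ite_sum_zero]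
  refine sum_congr rfl fun ij hij ↦ ?_
  obtain rfl := mem_antidiagonal.1 hij
  simp only [coeff_residuePart, Nat.cast_add]
  split_ifs <;> grind

lemma residuePart_ofNat_mul (r : ZMod m) (n : ℕ) [n.AtLeastTwo] (φ : R⟦X⟧) :
    residuePart r (ofNat(n) * φ) = ofNat(n) * residuePart r φ := by
  simpa only [nsmul_eq_mul, Nat.cast_ofNat] using map_nsmul (residuePart r) (OfNat.ofNat n) φ

lemma residuePart_map (g : R →+* S) (r : ZMod m) (φ : R⟦X⟧) :
    residuePart r (φ.map g) = (residuePart r φ).map g := by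
  ext n
  simp [coeff_residuePart, apply_ite g]

lemma residuePart_eq_zero {ι : Type*} {t : ι → ℕ} {φ : R⟦X⟧} {r : ZMod m}
    (hφ : ∀ n ∉ Set.range t, coeff n φ = 0) (ht : ∀ i, (t i : ZMod m) ≠ r) :
    residuePart r φ = 0 := by
  ext n
  rw [coeff_residuePart, map_zero]
  split_ifs with hn
  · exact hφ n fun ⟨i, hi⟩ ↦ ht i (hi ▸ hn)
  · rfl

variable {A : Type*} [CommRing A]

lemma residuePart_zero_expand (hm : m ≠ 0) (φ : A⟦X⟧) :
    residuePart (0 : ZMod m) (expand m hm φ) = expand m hm φ := by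
  ext n
  rw [coeff_residuePart]
  split_ifs with h
  · rfl
  · exact (coeff_expand_of_not_dvd m hm φ fun hdvd ↦ h ((ZMod.natCast_eq_zero_iff n m).2 hdvd)).symm

lemma residuePart_expand_mul (hm : m ≠ 0) (r : ZMod m) (φ ψ : A⟦X⟧) :
    residuePart r (expand m hm φ * ψ) = expand m hm φ * residuePart r ψ := by
  rw [← residuePart_zero_expand hm φ, residuePart_residuePart_mul, sub_zero]

/-- If the exponents `t i` of `φ` in the residue class `r` are self-similar, in the sense that they
are the `t (s i) = M * t i + k`, and the coefficients are multiplied by `c` under `s`, then so is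
the corresponding part of `φ`. -/
lemma residuePart_eq_smul_X_pow_mul_expand {ι : Type*} {t : ι → ℕ} {s : ι → ι} {φ : A⟦X⟧}
    {r : ZMod m} {M k : ℕ} {c : A} (hM : M ≠ 0) (hφ : ∀ n ∉ Set.range t, coeff n φ = 0)
    (hs : ∀ i, (t i : ZMod m) = r ↔ i ∈ Set.range s) (hts : ∀ i, t (s i) = M * t i + k)
    (hc : ∀ i, coeff (t (s i)) φ = c * coeff (t i) φ) :
    residuePart r φ = c • (X ^ k * expand M hM φ) := by
  have coeff_right (l : ℕ) : coeff (M * l + k) (c • (X ^ k * expand M hM φ)) = c * coeff l φ := by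
    rw [coeff_smul, smul_eq_mul, coeff_X_pow_mul, coeff_expand_mul]
  ext n
  by_cases hn : ∃ i, t (s i) = n
  · obtain ⟨i, rfl⟩ := hn
    rw [coeff_residuePart, if_pos ((hs _).2 ⟨i, rfl⟩), hc, hts, coeff_right]
  · have left_eq_zero : coeff n (residuePart r φ) = 0 := by
      rw [coeff_residuePart, ite_eq_right_iff]
      refine fun hnr ↦ hφ n ?_
      rintro ⟨i, rfl⟩
      obtain ⟨j, rfl⟩ := (hs i).1 hnr
      exact hn ⟨j, rfl⟩
    rw [left_eq_zero, coeff_smul, coeff_X_pow_mul', coeff_expand]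
    split_ifs with hkn hMn
    · obtain ⟨l, hl⟩ := hMn
      have hl_notMem : l ∉ Set.range t := by
        rintro ⟨i, rfl⟩
        exact hn ⟨i, by rw [hts]; omega⟩
      rw [hl, Nat.mul_div_cancel_left _ (Nat.pos_of_ne_zero hM), hφ l hl_notMem, smul_zero]
    all_goals rw [smul_zero]

end ResiduePart

section Dissection

lemma eq_four_mul_of_two_mul_eq {x y : ZMod 7} (h : 2 * x = y) : x = 4 * y := by
  revert x y
  decide

lemma natCast_pentagonal_zmod_seven (k : ℤ) :
    (pentagonal k : ZMod 7) = 4 * (k * (3 * k - 1)) :=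
  eq_four_mul_of_two_mul_eq (by exact_mod_cast congrArg Int.cast (two_mul_natCast_pentagonal k))

lemma two_mul_add_one_choose_two (j : ℕ) : 2 * (j + 1).choose 2 = j * (j + 1) := by
  simpa [mul_comm] using (Nat.add_one_mul_choose_eq j 1).symm

lemma natCast_add_one_choose_two_zmod_seven (j : ℕ) :
    ((j + 1).choose 2 : ZMod 7) = 4 * (j * (j + 1)) :=
  eq_four_mul_of_two_mul_eq (by exact_mod_cast congrArg Nat.cast (two_mul_add_one_choose_two j))

variable {R : Type*} [CommRing R]

lemma residuePart_pentagonalSeries_eq_zero {r : ZMod 7} (hr : r = 3 ∨ r = 4 ∨ r = 6) :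
    residuePart r (pentagonalSeries R) = 0 := by
  refine residuePart_eq_zero (fun n hn ↦ coeff_pentagonalSeries_eq_zero R hn) fun k ↦ ?_
  rw [natCast_pentagonal_zmod_seven]
  generalize (k : ZMod 7) = k
  revert k r
  decide

lemma residuePart_two_pentagonalSeries :
    residuePart (2 : ZMod 7) (pentagonalSeries R) =
      -(X ^ 2 * expand 49 (by decide) (pentagonalSeries R)) := by
  rw [← neg_one_smul R]
  refine residuePart_eq_smul_X_pow_mul_expand (s := fun l ↦ 7 * l - 1) _
    (fun n hn ↦ coeff_pentagonalSeries_eq_zero R hn) (fun k ↦ ?_) (fun l ↦ ?_) (fun l ↦ ?_)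
  · have class_two : ∀ x : ZMod 7, 4 * (x * (3 * x - 1)) = 2 ↔ x + 1 = 0 := by decide
    rw [natCast_pentagonal_zmod_seven, class_two]
    norm_cast
    rw [ZMod.intCast_zmod_eq_zero_iff_dvd]
    constructor
    · rintro ⟨l, hl⟩
      exact ⟨l, by push_cast at hl; linarith⟩
    · rintro ⟨l, rfl⟩
      exact ⟨l, by push_cast; ring⟩
  · have h₁ := two_mul_natCast_pentagonal l
    have h₂ := two_mul_natCast_pentagonal (7 * l - 1)
    zify
    linarith
  · rw [coeff_pentagonalSeries_pentagonal, coeff_pentagonalSeries_pentagonal,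
      show 7 * l - 1 = l + (2 * (3 * l - 1) + 1) by ring, Int.negOnePow_add,
      Int.negOnePow_odd _ (odd_two_mul_add_one _)]
    simp

lemma residuePart_pentagonalSeries_pow_three_eq_zero {r : ZMod 7} (hr : r = 2 ∨ r = 4 ∨ r = 5) :
    residuePart r (pentagonalSeries R ^ 3) = 0 := by
  refine residuePart_eq_zero (fun n hn ↦ coeff_pentagonalSeries_pow_three_eq_zero hn) fun j ↦ ?_
  rw [natCast_add_one_choose_two_zmod_seven]
  generalize (j : ZMod 7) = j
  revert j r
  decide

lemma residuePart_six_pentagonalSeries_pow_three :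
    residuePart (6 : ZMod 7) (pentagonalSeries R ^ 3) =
      (-7 : R) • (X ^ 6 * expand 49 (by decide) (pentagonalSeries R ^ 3)) := by
  refine residuePart_eq_smul_X_pow_mul_expand (s := fun l ↦ 7 * l + 3) _
    (fun n hn ↦ coeff_pentagonalSeries_pow_three_eq_zero hn) (fun j ↦ ?_) (fun l ↦ ?_) (fun l ↦ ?_)
  · have class_six : ∀ x : ZMod 7, 4 * (x * (x + 1)) = 6 ↔ x = 3 := by decide
    rw [natCast_add_one_choose_two_zmod_seven, class_six,
      show (3 : ZMod 7) = (3 : ℕ) from rfl, ZMod.natCast_eq_natCast_iff']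
    constructor
    · exact fun h ↦ ⟨j / 7, by dsimp only; omega⟩
    · rintro ⟨l, rfl⟩
      exact Nat.mul_add_mod 7 l 3
  · have h₁ := two_mul_add_one_choose_two l
    have h₂ := two_mul_add_one_choose_two (7 * l + 3)
    linarith
  · simp only [coeff_add_one_choose_two_pentagonalSeries_pow_three]
    rw [pow_add, pow_mul, Odd.neg_one_pow (by decide : Odd 7), Odd.neg_one_pow (by decide : Odd 3)]
    push_cast
    ring

end Dissection

section KleinRelations

variable {R : Type*} [CommRing R] {a b c d : R}

/-- The relations between the four nonzero parts of the Euler product modulo `7`. The first three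
are permuted by the rotation `a ↦ b ↦ c ↦ a`, which fixes the last one. -/
structure KleinRelations (a b c d : R) : Prop where
  rel_ab : a ^ 2 * d + a * b ^ 2 + c * d ^ 2 = 0
  rel_bc : b ^ 2 * d + b * c ^ 2 + a * d ^ 2 = 0
  rel_ca : c ^ 2 * d + c * a ^ 2 + b * d ^ 2 = 0
  rel_abc : a * b * c = d ^ 3

/-- Klein's quartic form. -/
def kleinQuartic (a b c : R) : R := a ^ 3 * b + b ^ 3 * c + c ^ 3 * a

/-- The first of two forms whose rotations under `a ↦ b ↦ c ↦ a` make up `kleinCofactor`. -/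
def cofactorU (a b c d : R) : R :=
  3 * a ^ 4 * b * d + 5 * a ^ 4 * c ^ 2 - b ^ 5 * c - 9 * b * c ^ 2 * d ^ 3

/-- The second of two forms whose rotations under `a ↦ b ↦ c ↦ a` make up `kleinCofactor`. -/
def cofactorV (a b c d : R) : R :=
  a ^ 6 - 3 * a ^ 4 * c * d + 7 * a ^ 2 * c ^ 2 * d ^ 2 - 4 * a * b ^ 2 * c ^ 2 * d - 2 * b ^ 5 * d

/-- The form of degree `6` whose product with `a + b + c + d` is homogeneous of class `0` modulo `7`
when `a`, `b`, `c`, `d` have classes `0`, `1`, `5`, `2` and satisfy the Klein relations. It is found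
by solving for the seven parts of a series whose product with `a + b + c + d` has class `0`, and
reducing the solution modulo the relations. -/
def kleinCofactor (a b c d : R) : R :=
  cofactorU a b c d + cofactorU b c a d + cofactorU c a b d
    + cofactorV a b c d + cofactorV b c a d + cofactorV c a b d
    - 7 * d ^ 2 * (kleinQuartic a b c + d ^ 4)

namespace KleinRelations

lemma cofactor_class_five (h : KleinRelations a b c d) :
    d * cofactorU a b c d + b * cofactorU b c a d + c * cofactorV a b c d
      - 7 * a * d ^ 2 * (kleinQuartic a b c + d ^ 4) = 0 := by
  simp only [cofactorU, cofactorV, kleinQuartic]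
  -- The multipliers here and below come from polynomial division by the Klein relations.
  linear_combination
    (-5 * a ^ 2 * b * d + 5 * a * b ^ 3 - 9 * b * c * d ^ 2) * h.rel_ab
      + (-3 * a * b * c * d - a * c ^ 3) * h.rel_bc
      + (a ^ 4 + a ^ 2 * c * d) * h.rel_ca
      + 7 * a * d ^ 3 * h.rel_abc

lemma cofactor_class_two (h : KleinRelations a b c d) :
    d * cofactorV a b c d + a * cofactorV c a b d + b * cofactorU c a b d
      + c * cofactorU b c a d = 0 := by
  simp only [cofactorU, cofactorV]
  linear_combination
    (-a ^ 4 - 2 * a ^ 2 * c * d) * h.rel_ab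
      + (-2 * b ^ 3 * d + 5 * b ^ 2 * c ^ 2) * h.rel_bc
      - 2 * a * b ^ 2 * d * h.rel_ca
      + 5 * a * b ^ 3 * h.rel_abc

lemma cofactor_class_zero (h : KleinRelations a b c d) :
    d * (a * cofactorV a b c d + b * cofactorV b c a d + c * cofactorV c a b d
      - 7 * d ^ 3 * (kleinQuartic a b c + d ^ 4)) = -(kleinQuartic a b c + 8 * d ^ 4) ^ 2 := by
  simp only [cofactorV, kleinQuartic]
  linear_combination
    (a ^ 5 - 29 * a * c ^ 2 * d ^ 2 - 6 * b ^ 3 * d ^ 2) * h.rel_ab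
      + (15 * a ^ 2 * b * d ^ 2 + 2 * a * b ^ 2 * c ^ 2 + b ^ 5 + 13 * b * c * d ^ 3
        - 6 * c ^ 3 * d ^ 2) * h.rel_bc
      + (-6 * a ^ 3 * d ^ 2 + 44 * a * c * d ^ 3 + c ^ 5) * h.rel_ca
      + (2 * a ^ 3 * c ^ 2 + 2 * a ^ 2 * b ^ 3 - 2 * b ^ 3 * c * d - 57 * d ^ 5) * h.rel_abc

lemma rotate (h : KleinRelations a b c d) : KleinRelations b c a d where
  rel_ab := h.rel_bc
  rel_bc := h.rel_ca
  rel_ca := h.rel_ab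
  rel_abc := by rw [← h.rel_abc]; ring

lemma mul_kleinCofactor (h : KleinRelations a b c d) :
    d * ((a + b + c + d) * kleinCofactor a b c d) = -(kleinQuartic a b c + 8 * d ^ 4) ^ 2 := by
  have quartic_rotate : kleinQuartic b c a = kleinQuartic a b c := by
    simp only [kleinQuartic]; ring
  have quartic_rotate' : kleinQuartic c a b = kleinQuartic a b c := by
    simp only [kleinQuartic]; ring
  have h₁ := h.cofactor_class_five
  have h₂ := h.rotate.cofactor_class_five
  have h₃ := h.rotate.rotate.cofactor_class_five
  rw [quartic_rotate] at h₂
  rw [quartic_rotate'] at h₃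
  rw [kleinCofactor]
  linear_combination h.cofactor_class_zero + d * (h₁ + h₂ + h₃) +
    d * (h.cofactor_class_two + h.rotate.cofactor_class_two +
      h.rotate.rotate.cofactor_class_two)

/-- Only seventh powers on the right: in characteristic `7` this is `-d * (a + b + c + d) ^ 7`. -/
lemma kleinQuartic_add_sq (h : KleinRelations a b c d) :
    (kleinQuartic a b c + d ^ 4) ^ 2 = -d * (a ^ 7 + b ^ 7 + c ^ 7 + d ^ 7)
      + 7 * (a * b ^ 4 * c ^ 2 * d + b ^ 2 * c ^ 3 * d ^ 3) := by
  rw [kleinQuartic]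
  linear_combination
    (a ^ 5 + 2 * a * b * d ^ 3 - 4 * b ^ 2 * c ^ 2 * d + 2 * b * c ^ 4) * h.rel_ab
    + (b ^ 5 - a ^ 4 * c) * h.rel_bc
    + (a ^ 2 * b ^ 2 * d + 3 * a ^ 2 * b * c ^ 2 - a * b ^ 4 - 3 * b * c ^ 3 * d + c ^ 5) * h.rel_ca
    + (3 * a ^ 2 * b ^ 3 - 2 * a * c ^ 3 * d - 2 * b ^ 3 * c * d - 2 * d ^ 5) * h.rel_abc

end KleinRelations

end KleinRelations

section EulerParts

instance charZero_powerSeries {R : Type*} [Semiring R] [CharZero R] : CharZero R⟦X⟧ where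
  cast_injective m n h := Nat.cast_injective (R := R) (C_injective (by simpa using h))

/-- The part of the Euler product `∏ (1 - qⁿ)` supported on the exponents congruent to `r` modulo
`7`. -/
noncomputable abbrev eulerPart (r : ZMod 7) : ℤ⟦X⟧ := residuePart r (pentagonalSeries ℤ)

lemma eulerPart_three : eulerPart 3 = 0 := residuePart_pentagonalSeries_eq_zero (by decide)

lemma eulerPart_four : eulerPart 4 = 0 := residuePart_pentagonalSeries_eq_zero (by decide)

lemma eulerPart_six : eulerPart 6 = 0 := residuePart_pentagonalSeries_eq_zero (by decide)

lemma pentagonalSeries_eq_add_eulerPart :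
    pentagonalSeries ℤ = eulerPart 0 + eulerPart 1 + eulerPart 5 + eulerPart 2 := by
  have h : ∑ r, eulerPart r = pentagonalSeries ℤ := sum_residuePart _
  have sum_eq : ∑ r, eulerPart r = eulerPart 0 + eulerPart 1 + eulerPart 2 + eulerPart 3 +
      eulerPart 4 + eulerPart 5 + eulerPart 6 := Fin.sum_univ_seven eulerPart
  rw [← h, sum_eq, eulerPart_three, eulerPart_four, eulerPart_six]
  ring

lemma residuePart_pentagonalSeries_mul (r : ZMod 7) (φ : ℤ⟦X⟧) :
    residuePart r (pentagonalSeries ℤ * φ) =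
      eulerPart 0 * residuePart r φ + eulerPart 1 * residuePart (r - 1) φ +
        eulerPart 5 * residuePart (r - 5) φ + eulerPart 2 * residuePart (r - 2) φ := by
  nth_rw 1 [pentagonalSeries_eq_add_eulerPart]
  simp only [add_mul, map_add, residuePart_residuePart_mul, sub_zero]

lemma eulerPart_two_pow_three :
    eulerPart 2 ^ 3 = -(X ^ 6 * expand 49 (by decide) (pentagonalSeries ℤ ^ 3)) := by
  rw [eulerPart, residuePart_two_pentagonalSeries, map_pow]
  ring

lemma kleinRelations_eulerPart :
    KleinRelations (eulerPart 0) (eulerPart 1) (eulerPart 5) (eulerPart 2) where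
  rel_ab := by
    have h := residuePart_pentagonalSeries_pow_three_eq_zero (R := ℤ) (r := 2) (by decide)
    simp only [pow_three, residuePart_pentagonalSeries_mul] at h
    reduce_mod_char at h
    simp only [eulerPart_three, eulerPart_four, eulerPart_six] at h
    exact mul_left_cancel₀ (OfNat.ofNat_ne_zero 3) (by linear_combination h)
  rel_bc := by
    have h := residuePart_pentagonalSeries_pow_three_eq_zero (R := ℤ) (r := 4) (by decide)
    simp only [pow_three, residuePart_pentagonalSeries_mul] at h
    reduce_mod_char at h
    simp only [eulerPart_three, eulerPart_four, eulerPart_six] at h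
    exact mul_left_cancel₀ (OfNat.ofNat_ne_zero 3) (by linear_combination h)
  rel_ca := by
    have h := residuePart_pentagonalSeries_pow_three_eq_zero (R := ℤ) (r := 5) (by decide)
    simp only [pow_three, residuePart_pentagonalSeries_mul] at h
    reduce_mod_char at h
    simp only [eulerPart_three, eulerPart_four, eulerPart_six] at h
    exact mul_left_cancel₀ (OfNat.ofNat_ne_zero 3) (by linear_combination h)
  rel_abc := by
    have h : residuePart (6 : ZMod 7) (pentagonalSeries ℤ ^ 3) = 7 * eulerPart 2 ^ 3 := by
      rw [residuePart_six_pentagonalSeries_pow_three, eulerPart_two_pow_three]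
      simp [smul_eq_C_mul]
    simp only [pow_three, residuePart_pentagonalSeries_mul] at h
    reduce_mod_char at h
    simp only [eulerPart_three, eulerPart_four, eulerPart_six] at h
    exact mul_left_cancel₀ (OfNat.ofNat_ne_zero 6) (by linear_combination h)

lemma residuePart_eulerPart (r s : ZMod 7) :
    residuePart r (eulerPart s) = if r = s then eulerPart s else 0 := residuePart_residuePart _ _ _

/-- The series `κ = a³b + b³c + c³a + d⁴` in the parts `a`, `b`, `c`, `d` of the Euler product of
classes `0`, `1`, `5`, `2`. It has class `1` and relates `∑ p(7n + 5) q^(7n + 5)` to the seventh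
power of the Euler product. -/
noncomputable def kleinSeries : ℤ⟦X⟧ :=
  kleinQuartic (eulerPart 0) (eulerPart 1) (eulerPart 5) + eulerPart 2 ^ 4

lemma residuePart_five_kleinCofactor :
    residuePart (5 : ZMod 7)
        (kleinCofactor (eulerPart 0) (eulerPart 1) (eulerPart 5) (eulerPart 2)) =
      -(7 * eulerPart 2 ^ 2 * kleinSeries) := by
  -- Among the monomials of the cofactor only those of `7 d² κ` have class `5`.
  simp only [kleinCofactor, cofactorU, cofactorV, kleinQuartic, kleinSeries, map_add, map_sub,
    mul_add, pow_succ, pow_zero, one_mul, mul_assoc, residuePart_ofNat_mul,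
    residuePart_residuePart_mul, residuePart_eulerPart]
  reduce_mod_char
  simp +decide only [if_true, if_false, mul_zero]
  ring

end EulerParts

section Reduction

instance fact_prime_seven : Fact (Nat.Prime 7) := ⟨by norm_num⟩

/-- Reduction modulo `n` of a power series with integer coefficients. -/
noncomputable abbrev reduceMod (n : ℕ) : ℤ⟦X⟧ →+* (ZMod n)⟦X⟧ :=
  PowerSeries.map (Int.castRingHom (ZMod n))

lemma expand_zmod_eq_pow (q : ℕ) [hq : Fact q.Prime] (φ : (ZMod q)⟦X⟧) :
    expand q hq.out.ne_zero φ = φ ^ q := by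
  have h := MvPowerSeries.map_frobenius_expand (p := q) hq.out.ne_zero (f := φ)
  rw [ZMod.frobenius_zmod, MvPowerSeries.map_id, RingHom.id_apply] at h
  exact h

lemma map_pentagonalSeries {R S : Type*} [CommRing R] [CommRing S] (g : R →+* S) :
    (pentagonalSeries R).map g = pentagonalSeries S := by
  ext n
  rw [coeff_map]
  by_cases hn : n ∈ Set.range pentagonal
  · obtain ⟨k, rfl⟩ := hn
    simp [coeff_pentagonalSeries_pentagonal]
  · rw [coeff_pentagonalSeries_eq_zero R hn, coeff_pentagonalSeries_eq_zero S hn, map_zero]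

lemma pentagonalSeries_ne_zero {R : Type*} [CommRing R] [Nontrivial R] :
    pentagonalSeries R ≠ 0 := by
  intro h
  have := coeff_pentagonalSeries_pentagonal R 0
  simp [h] at this

lemma natCast_dvd_iff_reduceMod_eq_zero (n : ℕ) (φ : ℤ⟦X⟧) :
    (n : ℤ⟦X⟧) ∣ φ ↔ reduceMod n φ = 0 := by
  constructor
  · rintro ⟨ψ, rfl⟩
    rw [map_mul, map_natCast, ← map_natCast C, ZMod.natCast_self, map_zero, zero_mul]
  · intro h
    have coeff_dvd (k : ℕ) : (n : ℤ) ∣ coeff k φ := by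
      rw [← ZMod.intCast_zmod_eq_zero_iff_dvd]
      simpa using congrArg (coeff k) h
    choose ψ hψ using coeff_dvd
    refine ⟨.mk ψ, ?_⟩
    ext k
    rw [← map_natCast C, coeff_C_mul, coeff_mk, hψ]

lemma residuePart_pentagonalSeries_pow_seventeen_eq_zero {r : ZMod 7}
    (hr : r = 2 ∨ r = 4 ∨ r = 5 ∨ r = 6) :
    residuePart r (pentagonalSeries (ZMod 7) ^ 17) = 0 := by
  have pow_eq : pentagonalSeries (ZMod 7) ^ 17 =
      expand 7 (by decide) (pentagonalSeries (ZMod 7) ^ 2) * pentagonalSeries (ZMod 7) ^ 3 := by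
    rw [expand_zmod_eq_pow]
    ring
  have cube_part : residuePart r (pentagonalSeries (ZMod 7) ^ 3) = 0 := by
    rcases hr with hr | hr | hr | rfl
    · exact residuePart_pentagonalSeries_pow_three_eq_zero (.inl hr)
    · exact residuePart_pentagonalSeries_pow_three_eq_zero (.inr (.inl hr))
    · exact residuePart_pentagonalSeries_pow_three_eq_zero (.inr (.inr hr))
    · rw [residuePart_six_pentagonalSeries_pow_three, show (-7 : ZMod 7) = 0 by decide, zero_smul]
  rw [pow_eq, residuePart_expand_mul, cube_part, mul_zero]

lemma reduceMod_seven : reduceMod 7 7 = 0 :=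
  (natCast_dvd_iff_reduceMod_eq_zero 7 _).1 (by simp)

lemma reduceMod_eulerPart_two :
    reduceMod 7 (eulerPart 2) = -(X ^ 2 * pentagonalSeries (ZMod 7) ^ 49) := by
  rw [← residuePart_map, map_pentagonalSeries,
    residuePart_two_pentagonalSeries, PowerSeries.expand_mul (p := 7) (by decide) 7 (by decide),
    expand_zmod_eq_pow, expand_zmod_eq_pow, ← pow_mul]

end Reduction

section Partitions

open scoped PowerSeries.WithPiTopology

/-- The generating series of the partition function. -/
noncomputable def partitionSeries : ℤ⟦X⟧ := .mk fun n ↦ (p n : ℤ)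

lemma pentagonalSeries_mul_partitionSeries : pentagonalSeries ℤ * partitionSeries = 1 := by
  have prod_euler := WithPiTopology.hasProd_one_sub_X_pow ℤ
  have prod_geom := Nat.Partition.hasProd_powerSeriesMk_card_restricted ℤ (fun _ ↦ True)
  have series_eq : (PowerSeries.mk fun n ↦ ((Nat.Partition.restricted n fun _ ↦ True).card : ℤ)) =
      partitionSeries := by
    ext n
    simp [partitionSeries, p, Nat.Partition.restricted]
  rw [series_eq] at prod_geom
  refine (prod_euler.mul prod_geom).unique ?_
  convert hasProd_one using 2 with i
  simp only [if_true]
  rw [mul_comm]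
  simp_rw [pow_mul]
  exact WithPiTopology.tsum_pow_mul_one_sub_of_constantCoeff_eq_zero (by simp)

lemma residuePart_one_kleinSeries : residuePart (1 : ZMod 7) kleinSeries = kleinSeries := by
  simp only [kleinSeries, kleinQuartic, map_add, pow_succ, pow_zero, one_mul, mul_assoc,
    residuePart_residuePart_mul, residuePart_eulerPart]
  reduce_mod_char
  simp only [if_true]

lemma residuePart_one_eulerPart_two_pow_four :
    residuePart (1 : ZMod 7) (eulerPart 2 ^ 4) = eulerPart 2 ^ 4 := by
  simp only [pow_succ, pow_zero, one_mul, mul_assoc, residuePart_residuePart_mul,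
    residuePart_eulerPart]
  reduce_mod_char
  simp only [if_true]

lemma residuePart_five_partitionSeries_mul :
    residuePart (5 : ZMod 7) partitionSeries * (kleinSeries + 7 * eulerPart 2 ^ 4) ^ 2 =
      7 * eulerPart 2 ^ 3 * kleinSeries := by
  set A := kleinCofactor (eulerPart 0) (eulerPart 1) (eulerPart 5) (eulerPart 2)
  set s := kleinSeries + 7 * eulerPart 2 ^ 4 with hs
  have residuePart_one_s : residuePart (1 : ZMod 7) s = s := by
    rw [hs, map_add, residuePart_ofNat_mul, residuePart_one_kleinSeries,
      residuePart_one_eulerPart_two_pow_four]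
  have residuePart_s_mul (r : ZMod 7) (φ : ℤ⟦X⟧) :
      residuePart r (s * φ) = s * residuePart (r - 1) φ := by
    rw [← residuePart_one_s, residuePart_residuePart_mul]
  have cofactor_eq : eulerPart 2 * A = -(s * (s * partitionSeries)) := by
    have h := kleinRelations_eulerPart.mul_kleinCofactor
    rw [← pentagonalSeries_eq_add_eulerPart] at h
    rw [hs, kleinSeries]
    linear_combination partitionSeries * h
      - eulerPart 2 * A * pentagonalSeries_mul_partitionSeries
  have class_zero := congrArg (residuePart (0 : ZMod 7)) cofactor_eq
  rw [residuePart_residuePart_mul, map_neg, residuePart_s_mul, residuePart_s_mul] at class_zero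
  reduce_mod_char at class_zero
  rw [residuePart_five_kleinCofactor] at class_zero
  linear_combination class_zero

lemma reduceMod_kleinSeries_sq :
    reduceMod 7 kleinSeries ^ 2 =
      -(reduceMod 7 (eulerPart 2) * pentagonalSeries (ZMod 7) ^ 7) := by
  have pow_seven : pentagonalSeries (ZMod 7) ^ 7 = reduceMod 7 (eulerPart 0 ^ 7 + eulerPart 1 ^ 7
      + eulerPart 5 ^ 7 + eulerPart 2 ^ 7) := by
    rw [← map_pentagonalSeries (Int.castRingHom (ZMod 7)), pentagonalSeries_eq_add_eulerPart]
    simp only [map_add, map_pow, ← expand_zmod_eq_pow]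
  have h := congrArg (reduceMod 7) kleinRelations_eulerPart.kleinQuartic_add_sq
  rw [map_add, map_mul, map_mul (reduceMod 7) 7, reduceMod_seven, ← pow_seven, ← kleinSeries] at h
  rw [← map_pow, h, map_neg]
  ring

lemma reduceMod_kleinSeries_ne_zero : reduceMod 7 kleinSeries ≠ 0 := by
  intro h
  have := reduceMod_kleinSeries_sq
  simp [h, reduceMod_eulerPart_two, pentagonalSeries_ne_zero] at this

lemma exists_residuePart_five_partitionSeries_eq :
    ∃ Q : ℤ⟦X⟧, residuePart (5 : ZMod 7) partitionSeries = 7 * Q ∧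
      reduceMod 7 Q * reduceMod 7 kleinSeries = reduceMod 7 (eulerPart 2) ^ 3 := by
  have relation := residuePart_five_partitionSeries_mul
  have hdvd : (7 : ℤ⟦X⟧) ∣ residuePart (5 : ZMod 7) partitionSeries := by
    refine (natCast_dvd_iff_reduceMod_eq_zero 7 _).2 ?_
    have h := congrArg (reduceMod 7) relation
    simp only [map_mul, map_pow, map_add, reduceMod_seven, zero_mul, add_zero] at h
    exact (mul_eq_zero.1 h).resolve_right (pow_ne_zero 2 reduceMod_kleinSeries_ne_zero)
  obtain ⟨Q, hQ⟩ := hdvd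
  refine ⟨Q, hQ, mul_right_cancel₀ reduceMod_kleinSeries_ne_zero ?_⟩
  rw [hQ, mul_assoc, mul_assoc] at relation
  have h := congrArg (reduceMod 7) (mul_left_cancel₀ (OfNat.ofNat_ne_zero 7) relation)
  simp only [map_mul, map_pow, map_add, reduceMod_seven] at h
  linear_combination h

lemma exists_residuePart_five_partitionSeries_eq_or :
    ∃ Q : ℤ⟦X⟧, residuePart (5 : ZMod 7) partitionSeries = 7 * Q ∧
      (reduceMod 7 Q = X ^ 5 * pentagonalSeries (ZMod 7) ^ 119 ∨
        reduceMod 7 Q = -(X ^ 5 * pentagonalSeries (ZMod 7) ^ 119)) := by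
  obtain ⟨Q, hQ, hQk⟩ := exists_residuePart_five_partitionSeries_eq
  refine ⟨Q, hQ, sq_eq_sq_iff_eq_or_eq_neg.1 ?_⟩
  have hne : X ^ 2 * pentagonalSeries (ZMod 7) ^ 56 ≠ 0 :=
    mul_ne_zero (pow_ne_zero _ X_ne_zero) (pow_ne_zero _ pentagonalSeries_ne_zero)
  refine mul_right_cancel₀ hne ?_
  have hsq := reduceMod_kleinSeries_sq
  rw [reduceMod_eulerPart_two] at hsq hQk
  linear_combination (reduceMod 7 Q * reduceMod 7 kleinSeries
    - X ^ 6 * pentagonalSeries (ZMod 7) ^ 147) * hQk - reduceMod 7 Q ^ 2 * hsq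

lemma fortyNine_dvd_p {k : ℕ} (hk : (k : ZMod 7) = 2 ∨ (k : ZMod 7) = 4 ∨ (k : ZMod 7) = 5 ∨
    (k : ZMod 7) = 6) : 49 ∣ p (7 * k + 5) := by
  obtain ⟨Q, hQ, hQX⟩ := exists_residuePart_five_partitionSeries_eq_or
  have coeff_pow : coeff (7 * k + 5) (X ^ 5 * pentagonalSeries (ZMod 7) ^ 119) = 0 := by
    rw [coeff_X_pow_mul, show 119 = 17 * 7 by rfl, pow_mul, ← expand_zmod_eq_pow, coeff_expand_mul]
    have h := congrArg (coeff k) (residuePart_pentagonalSeries_pow_seventeen_eq_zero hk)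
    simpa [coeff_residuePart] using h
  have coeff_Q : ((coeff (7 * k + 5) Q : ℤ) : ZMod 7) = 0 := by
    have h : ((coeff (7 * k + 5) Q : ℤ) : ZMod 7) = coeff (7 * k + 5) (reduceMod 7 Q) := by simp
    rcases hQX with hQX | hQX <;> simp [h, hQX, coeff_pow]
  obtain ⟨t, ht⟩ := (ZMod.intCast_zmod_eq_zero_iff_dvd _ _).1 coeff_Q
  have coeff_p : (p (7 * k + 5) : ℤ) = 7 * coeff (7 * k + 5) Q := by
    have class_five : ((7 * k + 5 : ℕ) : ZMod 7) = 5 := by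
      push_cast
      reduce_mod_char
    have h := congrArg (coeff (7 * k + 5)) hQ
    rwa [coeff_residuePart, if_pos class_five, partitionSeries, coeff_mk,
      ← map_ofNat C, coeff_C_mul] at h
  omega

end Partitions

theorem p_49n_add_40_mod_49_general (r : ℕ) (hr : r ∈ ({19, 33, 40, 47} : Finset ℕ)) (n : ℕ) :
    p (49 * n + r) % 49 = 0 := by
  obtain ⟨s, rfl, hs⟩ : ∃ s, r = 7 * s + 5 ∧ (s : ZMod 7) ∈ ({2, 4, 5, 6} : Finset (ZMod 7)) := by
    fin_cases hr
    exacts [⟨2, by decide⟩, ⟨4, by decide⟩, ⟨5, by decide⟩, ⟨6, by decide⟩]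
  have class_eq : ((7 * n + s : ℕ) : ZMod 7) = s := by
    push_cast
    reduce_mod_char
  rw [show 49 * n + (7 * s + 5) = 7 * (7 * n + s) + 5 by ring]
  exact Nat.mod_eq_zero_of_dvd (fortyNine_dvd_p (by simpa [class_eq] using hs))

/-- Ramanujan-type congruence: `p(49n + 40) ≡ 0 (mod 49)` for all `n ≥ 0`. -/
theorem p_49n_add_40_mod_49 (n : ℕ) : p (49 * n + 40) % 49 = 0 :=
  p_49n_add_40_mod_49_general 40 (by decide) n
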